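/- Let p be an odd prime, let (G,N) be a pair of finite p-groups with N powerfully embedded in G, and let σ : N* → G be a covering pair of (G,N) (a relative central extension with N* a finite p-group whose kernel A satisfies A ≤ Z(N*,G) ∩ [N*,G]). Then for every nonnegative integer k, 𝕌_k([N*,G]) = [𝕌_k(N*), G]. (This is equation (3.2), the key identity established in the proof of Theorem 3.11.) -/

import Mathlib

/-! The `G`-commutators become ordinary commutators in the finite `p`-group `H = N* ⋊ G`: there
`[X, G]` is `⁅X, H⁆` for each subgroup `X` of `N*`, because `N*` acts on itself by conjugation
through `σ`. The kernel `A` of `σ` is central in `H`, and powerful embedding of `N` turns into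
`⁅M, H⁆ ≤ 𝕌₁(M) A` for `M = N*`. Call a normal subgroup `M` of `H` with this property
*powerful modulo `A`*.

For such `M`, with `K = ⁅M, H⁆`, one has `𝕌₁(K) = ⁅𝕌₁(M), H⁆` (`pPow_one_commutator`).
Indeed `⁅K, H⁆ ≤ ⁅𝕌₁(M), H⁆`, since `A` is central. Modulo `⁅𝕌₁(M), H⁆`
the group `K` is therefore central, and `c = ⁅g, x⁆` satisfies
`1 = ⁅g, x ^ p⁆ = (c x) ^ p x ^ (-p) = c ^ p`. Conversely, modulo `𝕌₁(K)` and `⁅𝕌₁(M), H, H⁆`,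
the commutator `⁅x, c⁆` is central of exponent `p`, so `(c x) ^ p = c ^ p x ^ p` as `p` is odd,
which gives `⁅𝕌₁(M), H⁆ ≤ 𝕌₁(K) ⁅𝕌₁(M), H, H⁆`; nilpotency of `H` removes the second factor.

Consequently `𝕌₁(M)` is again powerful modulo `A`, and iterating gives
`𝕌₁^k(K) = ⁅𝕌₁^k(M), H⁆`. It remains to compare `𝕌₁^k` with `𝕌_k`. In a subgroup that is
powerful modulo `A`, every element of `𝕌₁` is a `p`-th power modulo `A`
(`exists_pow_of_mem_pPow_one`, by successive approximation along the series `𝕌₁^i(M)`), so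
`𝕌₁^k(M) ≤ 𝕌_k(M) A`, which has the same commutator with `H` as `𝕌_k(M)`. As `K` is powerful
modulo the trivial subgroup, `𝕌₁^k(K) = 𝕌_k(K)`. -/


/-- The iterated commutator subgroup `[N, _k G]`. -/
def iterCommG {G : Type*} [Group G] (N : Subgroup G) : ℕ → Subgroup G
  | 0 => N
  | k + 1 => ⁅iterCommG N k, (⊤ : Subgroup G)⁆

/-- `𝕌_i(H)`: the subgroup generated by all `p^i`-th powers of elements of `H`. -/
def pPow {G : Type*} [Group G] (p i : ℕ) (H : Subgroup G) : Subgroup G :=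
  Subgroup.closure {x | ∃ h ∈ H, x = h ^ p ^ i}

/-- A relative central extension of the pair `(G, N)`. -/
structure RelCentralExt {M G : Type*} [Group M] [Group G] (σ : M →* G) (N : Subgroup G) where
  /-- the action of `G` on `M`, written `m ↦ m^g` in the paper -/
  act : M → G → M
  act_mul : ∀ m n g, act (m * n) g = act m g * act n g
  act_one : ∀ m, act m 1 = m
  act_act : ∀ m g h, act (act m g) h = act m (g * h)
  range_eq : σ.range = N
  sigma_act : ∀ m g, σ (act m g) = g⁻¹ * σ m * g
  act_sigma : ∀ m m₁, act m (σ m₁) = m₁⁻¹ * m * m₁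
  ker_act : ∀ a ∈ σ.ker, ∀ g : G, act a g = a

namespace RelCentralExt

variable {M G : Type*} [Group M] [Group G] {σ : M →* G} {N : Subgroup G}

/-- The `G`-commutator `[m, g] = m⁻¹ · m^g`. -/
def cmt (E : RelCentralExt σ N) (m : M) (g : G) : M := m⁻¹ * E.act m g

/-- The subgroup `[M', G]` generated by all `G`-commutators `[m, g]`, `m ∈ M'`, `g ∈ G`. -/
def commSub (E : RelCentralExt σ N) (M' : Subgroup M) : Subgroup M :=
  Subgroup.closure {x | ∃ m ∈ M', ∃ g : G, x = E.cmt m g}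

/-- The iterated subgroup `[M', _n G]`. -/
def iterComm (E : RelCentralExt σ N) (M' : Subgroup M) : ℕ → Subgroup M
  | 0 => M'
  | n + 1 => E.commSub (E.iterComm M' n)

end RelCentralExt

open scoped commutatorElement

/-! ### The subgroups generated by powers -/

section Powers

variable {H : Type*} [Group H]

theorem pPow_normal (p i : ℕ) {M : Subgroup H} (hM : M.Normal) : (pPow p i M).Normal := by
  refine ⟨fun n hn g => ?_⟩
  have : pPow p i M ≤ (pPow p i M).comap (MulAut.conj g).toMonoidHom := by
    refine (Subgroup.closure_le _).2 ?_
    rintro _ ⟨h, hh, rfl⟩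
    refine Subgroup.subset_closure ⟨g * h * g⁻¹, hM.conj_mem h hh g, ?_⟩
    simp
  simpa using this hn

theorem pPow_mono (p i : ℕ) {M L : Subgroup H} (h : M ≤ L) : pPow p i M ≤ pPow p i L :=
  Subgroup.closure_mono fun _ ⟨y, hy, e⟩ => ⟨y, h hy, e⟩

theorem pow_mem_pPow (p i : ℕ) {M : Subgroup H} {x : H} (hx : x ∈ M) : x ^ p ^ i ∈ pPow p i M :=
  Subgroup.subset_closure ⟨x, hx, rfl⟩

theorem pow_mem_pPow_one (p : ℕ) {M : Subgroup H} {x : H} (hx : x ∈ M) : x ^ p ∈ pPow p 1 M := by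
  simpa using pow_mem_pPow p 1 hx

theorem pPow_one_le {p : ℕ} {M L : Subgroup H} (h : ∀ x ∈ M, x ^ p ∈ L) : pPow p 1 M ≤ L := by
  refine (Subgroup.closure_le _).2 ?_
  rintro _ ⟨y, hy, rfl⟩
  simpa using h y hy

theorem pPow_le_self (p i : ℕ) (M : Subgroup H) : pPow p i M ≤ M := by
  refine (Subgroup.closure_le _).2 ?_
  rintro _ ⟨y, hy, rfl⟩
  exact pow_mem hy _

theorem map_pPow {H' : Type*} [Group H'] (f : H →* H') (p i : ℕ) (M : Subgroup H) :
    (pPow p i M).map f = pPow p i (M.map f) := by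
  unfold pPow
  rw [MonoidHom.map_closure]
  congr 1
  ext y
  constructor
  · rintro ⟨_, ⟨x, hx, rfl⟩, rfl⟩
    exact ⟨f x, ⟨x, hx, rfl⟩, map_pow _ _ _⟩
  · rintro ⟨_, ⟨x, hx, rfl⟩, rfl⟩
    exact ⟨_, ⟨x, hx, rfl⟩, map_pow _ _ _⟩

/-- `𝕌₁` of a nontrivial finite `p`-group is proper: it lies in every subgroup of index `p`. -/
theorem pPow_one_lt [Finite H] {p : ℕ} [Fact p.Prime] (hH : IsPGroup p H) {M : Subgroup H}
    (hM : M ≠ ⊥) : pPow p 1 M < M := by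
  refine lt_of_le_of_ne (pPow_le_self p 1 M) fun heq => ?_
  have hp : p.Prime := Fact.out
  obtain ⟨n, hn⟩ := IsPGroup.iff_card.1 (hH.to_subgroup M)
  obtain _ | n := n
  · exact hM (Subgroup.eq_bot_of_card_eq M (by simpa using hn))
  obtain ⟨L, hL⟩ := Sylow.exists_subgroup_card_pow_prime (G := M) p (n := n)
    (by rw [hn]; exact pow_dvd_pow _ (Nat.le_succ n))
  have hidx : L.index = p := by
    have h1 := L.card_mul_index
    rw [hL, hn, pow_succ] at h1
    exact Nat.eq_of_mul_eq_mul_left (pow_pos hp.pos n) h1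
  have hnorm : L.Normal := by
    apply Subgroup.normal_of_index_eq_minFac_card
    rw [hidx, hn, hp.pow_minFac (Nat.succ_ne_zero n)]
  have hle : pPow p 1 M ≤ L.map M.subtype := pPow_one_le fun x hx =>
    ⟨(⟨x, hx⟩ : M) ^ p, SetLike.mem_coe.2
      (by simpa only [hidx] using L.pow_index_mem (⟨x, hx⟩ : M)), rfl⟩
  have htop : L = ⊤ := by
    refine (Subgroup.eq_top_iff' L).2 fun x => ?_
    obtain ⟨y, hy, hyx⟩ := hle (heq.symm ▸ x.2 : (x : H) ∈ pPow p 1 M)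
    have : y = x := Subtype.ext hyx
    exact this ▸ hy
  rw [htop, Subgroup.index_top] at hidx
  exact hp.one_lt.ne hidx

theorem exists_iterate_pPow_eq_bot [Finite H] {p : ℕ} [Fact p.Prime] (hH : IsPGroup p H)
    (M : Subgroup H) : ∃ n, (pPow p 1)^[n] M = ⊥ := by
  induction M using WellFoundedLT.induction with
  | ind M ih =>
    by_cases hM : M = ⊥
    · exact ⟨0, hM⟩
    · obtain ⟨n, hn⟩ := ih _ (pPow_one_lt hH hM)
      exact ⟨n + 1, by rwa [Function.iterate_succ_apply]⟩

theorem iterate_pPow_le (p : ℕ) (M : Subgroup H) (i : ℕ) : (pPow p 1)^[i] M ≤ M := by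
  induction i with
  | zero => exact le_rfl
  | succ i ih => rw [Function.iterate_succ_apply']; exact (pPow_le_self _ _ _).trans ih

theorem pow_mem_iterate_pPow (p : ℕ) {M : Subgroup H} {x : H} (hx : x ∈ M) (i : ℕ) :
    x ^ p ^ i ∈ (pPow p 1)^[i] M := by
  induction i with
  | zero => simpa using hx
  | succ i ih =>
    rw [Function.iterate_succ_apply', pow_succ, pow_mul]
    exact pow_mem_pPow_one p ih

/-- `𝕌_i(M) ≤ 𝕌₁^i(M)` holds in every group. -/
theorem pPow_le_iterate (p : ℕ) (M : Subgroup H) (i : ℕ) : pPow p i M ≤ (pPow p 1)^[i] M := by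
  refine (Subgroup.closure_le _).2 ?_
  rintro _ ⟨y, hy, rfl⟩
  exact pow_mem_iterate_pPow p hy i

end Powers

/-! ### Commutators modulo a normal subgroup -/

section Commutators

variable {H : Type*} [Group H]

/-- The preimage in `H` of the centre of `H ⧸ T`. -/
def centerMod (T : Subgroup H) [T.Normal] : Subgroup H :=
  (Subgroup.center (H ⧸ T)).comap (QuotientGroup.mk' T)

theorem mem_centerMod {T : Subgroup H} [T.Normal] {x : H} :
    x ∈ centerMod T ↔ ∀ g : H, Commute (g : H ⧸ T) (x : H ⧸ T) := by
  unfold centerMod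
  rw [Subgroup.mem_comap, Subgroup.mem_center_iff]
  constructor
  · exact fun h g => h g
  · intro h g
    obtain ⟨g, rfl⟩ := QuotientGroup.mk_surjective g
    exact h g

theorem commutator_top_le_iff {T : Subgroup H} [T.Normal] {X : Subgroup H} :
    ⁅X, (⊤ : Subgroup H)⁆ ≤ T ↔ X ≤ centerMod T := by
  rw [Subgroup.commutator_comm, Subgroup.commutator_le]
  constructor
  · intro h x hx
    rw [mem_centerMod]
    intro g
    have := (QuotientGroup.eq_one_iff _).2 (h g trivial x hx)
    rw [← commutatorElement_eq_one_iff_commute]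
    exact this
  · intro h g _ x hx
    rw [← QuotientGroup.eq_one_iff]
    exact commutatorElement_eq_one_iff_commute.2 (mem_centerMod.1 (h hx) g)

theorem center_le_centerMod (T : Subgroup H) [T.Normal] : Subgroup.center H ≤ centerMod T := by
  intro x hx
  rw [mem_centerMod]
  intro g
  have := Subgroup.mem_center_iff.1 hx g
  exact congrArg (QuotientGroup.mk' T) this

theorem commutator_sup_center {A : Subgroup H} (hA : A ≤ Subgroup.center H) {X : Subgroup H}
    (hX : X.Normal) : ⁅X ⊔ A, (⊤ : Subgroup H)⁆ ≤ ⁅X, (⊤ : Subgroup H)⁆ :=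
  commutator_top_le_iff.2
    (sup_le (commutator_top_le_iff.1 le_rfl) (hA.trans (center_le_centerMod _)))

/-- A form of Nakayama's lemma for nilpotent groups. -/
theorem le_of_le_sup_commutator [Group.IsNilpotent H] {L R : Subgroup H} (hR : R.Normal)
    (h : L ≤ R ⊔ ⁅L, (⊤ : Subgroup H)⁆) : L ≤ R := by
  have key : ∀ n, L ≤ R ⊔ Subgroup.lowerCentralSeries (⊤ : Subgroup H) n := by
    intro n
    induction n with
    | zero => simp
    | succ n ih =>
      refine h.trans (sup_le le_sup_left ?_)
      refine (Subgroup.commutator_mono ih le_rfl).trans ?_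
      rw [commutator_top_le_iff]
      refine sup_le ?_ ?_
      · rw [← commutator_top_le_iff]
        exact (Subgroup.commutator_le_left R ⊤).trans le_sup_left
      · rw [← commutator_top_le_iff]
        exact le_sup_right
  obtain ⟨n, hn⟩ := Subgroup.nilpotent_iff_lowerCentralSeries.1 ‹Group.IsNilpotent H›
  simpa [hn] using key n

/-- The expansion of `(c x) ^ n` in class two. -/
theorem mul_pow_of_central_commutator {c x z : H} (hz : x * c = z * (c * x)) (hc : Commute z c)
    (hx : Commute z x) (n : ℕ) : (c * x) ^ n = z ^ n.choose 2 * (c ^ n * x ^ n) := by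
  have h1 : ∀ n : ℕ, x ^ n * c = z ^ n * (c * x ^ n) := by
    intro n
    induction n with
    | zero => simp
    | succ n ih =>
      calc x ^ (n + 1) * c = x ^ n * (x * c) := by rw [pow_succ, mul_assoc]
        _ = x ^ n * z * c * x := by rw [hz]; simp only [mul_assoc]
        _ = z * (x ^ n * c) * x := by rw [← (hx.pow_right n).eq]; simp only [mul_assoc]
        _ = z ^ (n + 1) * (c * x ^ (n + 1)) := by
          rw [ih, pow_succ' z, pow_succ x]; simp only [mul_assoc]
  induction n with
  | zero => simp
  | succ n ih =>
    have hzn : Commute (z ^ n) (c ^ n) := hc.pow_pow n n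
    calc (c * x) ^ (n + 1) = z ^ n.choose 2 * (c ^ n * (x ^ n * c) * x) := by
          rw [pow_succ, ih]; simp only [mul_assoc]
      _ = z ^ n.choose 2 * (c ^ n * z ^ n * (c * (x ^ n * x))) := by
          rw [h1]; simp only [mul_assoc]
      _ = z ^ (n + 1).choose 2 * (c ^ (n + 1) * x ^ (n + 1)) := by
          rw [← hzn.eq, Nat.choose_succ_succ' n 1, Nat.choose_one_right, add_comm n, pow_add,
            pow_succ c, pow_succ x]
          simp only [mul_assoc]

/-- If `⁅x, c⁆` is central of exponent `p` modulo `T` and `p` is odd, then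
`(c x) ^ p = c ^ p x ^ p` modulo `T`. -/
theorem mk_mul_pow {p : ℕ} (hp : p.Prime) (hodd : Odd p) {T : Subgroup H} [T.Normal] {c x : H}
    (hz : ⁅x, c⁆ ∈ centerMod T) (hzp : ⁅x, c⁆ ^ p ∈ T) :
    ((c * x : H) : H ⧸ T) ^ p = (c : H ⧸ T) ^ p * (x : H ⧸ T) ^ p := by
  rw [mem_centerMod] at hz
  have h := mul_pow_of_central_commutator (c := (c : H ⧸ T)) (x := (x : H ⧸ T))
    (z := ((⁅x, c⁆ : H) : H ⧸ T)) (by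
      have : x * c = ⁅x, c⁆ * (c * x) := by simp [commutatorElement_def, mul_assoc]
      exact congrArg (QuotientGroup.mk' T) this) (hz c).symm (hz x).symm p
  have h2 : ((⁅x, c⁆ : H) : H ⧸ T) ^ p = 1 := (QuotientGroup.eq_one_iff _).2 hzp
  obtain ⟨r, hr⟩ : p ∣ p.choose 2 := hp.dvd_choose_self two_ne_zero (by
    rcases hp.two_le.lt_or_eq with h | h
    · exact h
    · subst h; exact absurd hodd (by decide))
  rw [hr, pow_mul, h2, one_pow, one_mul] at h
  exact h

end Commutators

/-! ### Subgroups that are powerful modulo a central subgroup -/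

section Powerful

variable {H : Type*} [Group H]

/-- A normal subgroup `M` of `H` with `⁅M, H⁆ ≤ 𝕌₁(M) A`. When `A` is normal and contained in `M`,
this says for odd `p` that `M / A` is powerfully embedded in `H / A`. -/
structure PowerfulMod (p : ℕ) (A M : Subgroup H) : Prop where
  normal : M.Normal
  comm_le : ⁅M, (⊤ : Subgroup H)⁆ ≤ pPow p 1 M ⊔ A

theorem PowerfulMod.comm_comm_le {p : ℕ} {A M : Subgroup H} (hA : A ≤ Subgroup.center H)
    (hM : PowerfulMod p A M) :
    ⁅⁅M, (⊤ : Subgroup H)⁆, (⊤ : Subgroup H)⁆ ≤ ⁅pPow p 1 M, (⊤ : Subgroup H)⁆ :=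
  (Subgroup.commutator_mono hM.comm_le le_rfl).trans
    (commutator_sup_center hA (pPow_normal p 1 hM.normal))

theorem pPow_one_sup_center_le (p : ℕ) {A X : Subgroup H} (hA : A ≤ Subgroup.center H) :
    pPow p 1 (X ⊔ A) ≤ pPow p 1 X ⊔ A := by
  have : A.Normal := ⟨fun a ha g => by
    rw [Subgroup.mem_center_iff.1 (hA ha) g]; simpa using ha⟩
  refine pPow_one_le fun y hy => ?_
  obtain ⟨u, hu, a, ha, rfl⟩ := Subgroup.mem_sup_of_normal_right.1 hy
  have hc : Commute u a := Subgroup.mem_center_iff.1 (hA ha) u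
  rw [hc.mul_pow]
  exact Subgroup.mul_mem_sup (pow_mem_pPow_one p hu) (pow_mem ha p)

theorem conj_eq_commutator_mul (g x : H) : g * x * g⁻¹ = ⁅g, x⁆ * x := by
  simp [commutatorElement_def]

theorem commutator_mem' {M : Subgroup H} {x : H} (hx : x ∈ M) (g : H) :
    ⁅g, x⁆ ∈ ⁅M, (⊤ : Subgroup H)⁆ := by
  rw [Subgroup.commutator_comm]
  exact Subgroup.commutator_mem_commutator trivial hx

/-- The identity for `k = 1`. For `≤`, work modulo `⁅𝕌₁(M), H⁆`, where `⁅M, H⁆` is central; for `≥`,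
nilpotency allows working modulo `⁅𝕌₁(M), H, H⁆` as well. -/
theorem pPow_one_commutator [Finite H] {p : ℕ} [hp : Fact p.Prime] (hodd : Odd p)
    (hH : IsPGroup p H) {A M : Subgroup H} (hA : A ≤ Subgroup.center H) (hM : PowerfulMod p A M) :
    pPow p 1 ⁅M, (⊤ : Subgroup H)⁆ = ⁅pPow p 1 M, (⊤ : Subgroup H)⁆ := by
  have := hM.normal
  have hMp := pPow_normal p 1 hM.normal
  have hK := pPow_normal p 1 (inferInstance : ⁅M, (⊤ : Subgroup H)⁆.Normal)
  have hnil : Group.IsNilpotent H := hH.isNilpotent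
  have hcc := hM.comm_comm_le hA
  apply le_antisymm
  · set T := ⁅pPow p 1 M, (⊤ : Subgroup H)⁆ with hT
    have hKT : ⁅M, (⊤ : Subgroup H)⁆ ≤ centerMod T := commutator_top_le_iff.1 hcc
    have hMT : pPow p 1 M ≤ centerMod T := commutator_top_le_iff.1 le_rfl
    -- Elements that are central of exponent `p` modulo `T` form a subgroup.
    let S : Subgroup H :=
      { carrier := {y | y ∈ centerMod T ∧ y ^ p ∈ T}
        mul_mem' := by
          rintro a b ⟨ha, ha'⟩ ⟨hb, hb'⟩
          refine ⟨mul_mem ha hb, ?_⟩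
          rw [← QuotientGroup.eq_one_iff] at ha' hb' ⊢
          have hc : Commute (a : H ⧸ T) (b : H ⧸ T) := mem_centerMod.1 hb a
          have : ((a * b : H) : H ⧸ T) ^ p = (a : H ⧸ T) ^ p * (b : H ⧸ T) ^ p := hc.mul_pow p
          exact this.trans (by
            rw [← QuotientGroup.mk_pow, ← QuotientGroup.mk_pow, ha', hb', one_mul])
        one_mem' := ⟨one_mem _, by simp⟩
        inv_mem' := by
          rintro a ⟨ha, ha'⟩
          exact ⟨inv_mem ha, by rw [inv_pow]; exact inv_mem ha'⟩ }
    have hKS : ⁅M, (⊤ : Subgroup H)⁆ ≤ S := by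
      rw [Subgroup.commutator_comm, Subgroup.commutator_le]
      intro g _ x hx
      have hc := hKT (commutator_mem' hx g)
      refine ⟨hc, ?_⟩
      have hcx : Commute ((⁅g, x⁆ : H) : H ⧸ T) (x : H ⧸ T) := (mem_centerMod.1 hc x).symm
      have hgx : Commute (g : H ⧸ T) ((x ^ p : H) : H ⧸ T) :=
        mem_centerMod.1 (hMT (pow_mem_pPow_one p hx)) g
      have e1 : ((g * x ^ p * g⁻¹ : H) : H ⧸ T) = ((x ^ p : H) : H ⧸ T) := by
        rw [QuotientGroup.mk_mul, QuotientGroup.mk_mul, hgx.eq, QuotientGroup.mk_inv,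
          mul_inv_cancel_right]
      rw [← conj_pow, conj_eq_commutator_mul, QuotientGroup.mk_pow, QuotientGroup.mk_mul,
        hcx.mul_pow, QuotientGroup.mk_pow] at e1
      rw [← QuotientGroup.eq_one_iff, QuotientGroup.mk_pow]
      exact mul_eq_right.1 e1
    exact pPow_one_le fun y hy => (hKS hy).2
  · refine le_of_le_sup_commutator hK ?_
    set T := pPow p 1 ⁅M, (⊤ : Subgroup H)⁆ ⊔
      ⁅⁅pPow p 1 M, (⊤ : Subgroup H)⁆, (⊤ : Subgroup H)⁆ with hT
    rw [commutator_top_le_iff]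
    refine pPow_one_le fun x hx => ?_
    rw [mem_centerMod]
    intro g
    have hc := commutator_mem' hx g
    have hz : ⁅x, ⁅g, x⁆⁆ ∈ ⁅⁅M, (⊤ : Subgroup H)⁆, (⊤ : Subgroup H)⁆ := commutator_mem' hc x
    have hzT : ⁅x, ⁅g, x⁆⁆ ∈ centerMod T := by
      refine (commutator_top_le_iff (X := ⁅pPow p 1 M, (⊤ : Subgroup H)⁆)).1 le_sup_right ?_
      exact hcc hz
    have hzp : ⁅x, ⁅g, x⁆⁆ ^ p ∈ T :=
      le_sup_left (a := pPow p 1 ⁅M, (⊤ : Subgroup H)⁆)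
        (pow_mem_pPow_one p (Subgroup.commutator_le_left _ _ hz))
    have e := mk_mul_pow hp.out hodd hzT hzp
    have hcp : ((⁅g, x⁆ : H) : H ⧸ T) ^ p = 1 := by
      rw [← QuotientGroup.mk_pow, QuotientGroup.eq_one_iff]
      exact le_sup_left (a := pPow p 1 ⁅M, (⊤ : Subgroup H)⁆) (pow_mem_pPow_one p hc)
    rw [hcp, one_mul, ← conj_eq_commutator_mul, ← QuotientGroup.mk_pow, conj_pow,
      QuotientGroup.mk_mul, QuotientGroup.mk_mul, QuotientGroup.mk_inv, mul_inv_eq_iff_eq_mul,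
      ← QuotientGroup.mk_pow] at e
    exact e

theorem PowerfulMod.pPow_one [Finite H] {p : ℕ} [Fact p.Prime] (hodd : Odd p)
    (hH : IsPGroup p H) {A M : Subgroup H} (hA : A ≤ Subgroup.center H) (hM : PowerfulMod p A M) :
    PowerfulMod p A (pPow p 1 M) where
  normal := pPow_normal p 1 hM.normal
  comm_le := by
    rw [← pPow_one_commutator hodd hH hA hM]
    exact (pPow_mono p 1 hM.comm_le).trans (pPow_one_sup_center_le p hA)

theorem PowerfulMod.iterate [Finite H] {p : ℕ} [Fact p.Prime] (hodd : Odd p)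
    (hH : IsPGroup p H) {A M : Subgroup H} (hA : A ≤ Subgroup.center H) (hM : PowerfulMod p A M)
    (i : ℕ) : PowerfulMod p A ((pPow p 1)^[i] M) := by
  induction i with
  | zero => exact hM
  | succ i ih => rw [Function.iterate_succ_apply']; exact ih.pPow_one hodd hH hA

theorem iterate_pPow_commutator [Finite H] {p : ℕ} [Fact p.Prime] (hodd : Odd p)
    (hH : IsPGroup p H) {A M : Subgroup H} (hA : A ≤ Subgroup.center H) (hM : PowerfulMod p A M)
    (i : ℕ) : (pPow p 1)^[i] ⁅M, (⊤ : Subgroup H)⁆ = ⁅(pPow p 1)^[i] M, (⊤ : Subgroup H)⁆ := by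
  induction i with
  | zero => rfl
  | succ i ih =>
    rw [Function.iterate_succ_apply', Function.iterate_succ_apply', ih,
      pPow_one_commutator hodd hH hA (hM.iterate hodd hH hA i)]

/-- Taking `p`-th powers is multiplicative modulo `𝕌₁^(i+2)(M) A` when one of the factors lies in
`𝕌₁^i(M)`. -/
theorem mk_mul_pow_iterate [Finite H] {p : ℕ} [hp : Fact p.Prime] (hodd : Odd p)
    (hH : IsPGroup p H) {A M : Subgroup H} (hA : A ≤ Subgroup.center H) (hM : PowerfulMod p A M)
    (i : ℕ) {T : Subgroup H} [T.Normal] (hT : T = (pPow p 1)^[i + 2] M ⊔ A) (c : H) {x : H}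
    (hx : x ∈ (pPow p 1)^[i] M) :
    ((c * x : H) : H ⧸ T) ^ p = (c : H ⧸ T) ^ p * (x : H ⧸ T) ^ p := by
  have hi := hM.iterate hodd hH hA i
  have hi1 := hM.iterate hodd hH hA (i + 1)
  have hz : ⁅x, c⁆ ∈ (pPow p 1)^[i + 1] M ⊔ A := by
    rw [Function.iterate_succ_apply']
    exact hi.comm_le (Subgroup.commutator_mem_commutator hx trivial)
  apply mk_mul_pow hp.out hodd
  · refine (commutator_top_le_iff.1 ?_) hz
    refine (commutator_sup_center hA hi1.normal).trans ?_
    rw [hT, Function.iterate_succ_apply' _ (i + 1)]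
    exact hi1.comm_le
  · rw [hT, Function.iterate_succ_apply' _ (i + 1)]
    exact pPow_one_sup_center_le p hA (pow_mem_pPow_one p hz)

/-- Every element of `𝕌₁(M)` is a `p`-th power modulo `A`: a `p`-th root modulo `𝕌₁^(i+1)(M) A` can
be corrected by an element of `𝕌₁^i(M)` to a root modulo `𝕌₁^(i+2)(M) A`, and the series
`𝕌₁^i(M)` reaches the trivial subgroup. -/
theorem exists_pow_of_mem_pPow_one [Finite H] {p : ℕ} [hp : Fact p.Prime] (hodd : Odd p)
    (hH : IsPGroup p H) {A M : Subgroup H} (hA : A ≤ Subgroup.center H) (hM : PowerfulMod p A M)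
    {g : H} (hg : g ∈ pPow p 1 M) : ∃ x ∈ M, (x ^ p)⁻¹ * g ∈ A := by
  have hAn : A.Normal := ⟨fun a ha g => by
    rw [Subgroup.mem_center_iff.1 (hA ha) g]; simpa using ha⟩
  have key : ∀ i, ∃ x ∈ M, (x ^ p)⁻¹ * g ∈ (pPow p 1)^[i + 1] M ⊔ A := by
    intro i
    induction i with
    | zero => exact ⟨1, one_mem _, by simpa using Subgroup.mem_sup_left hg⟩
    | succ i ih =>
      obtain ⟨x, hx, hxg⟩ := ih
      have hn := (hM.iterate hodd hH hA (i + 2)).normal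
      obtain ⟨T, hT⟩ : ∃ T, T = (pPow p 1)^[i + 2] M ⊔ A := ⟨_, rfl⟩
      have hTn : T.Normal := hT ▸ inferInstance
      have hmul := mk_mul_pow_iterate hodd hH hA hM i hT
      -- The `p`-th powers of elements of `𝕌₁^i(M)` form a subgroup modulo `T`.
      let S : Subgroup H :=
        { carrier := {y | ∃ w ∈ (pPow p 1)^[i] M, (w : H ⧸ T) ^ p = (y : H ⧸ T)}
          mul_mem' := by
            rintro a b ⟨v, hv, hv'⟩ ⟨w, hw, hw'⟩
            exact ⟨v * w, mul_mem hv hw, by rw [hmul v hw, hv', hw']; rfl⟩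
          one_mem' := ⟨1, one_mem _, by simp⟩
          inv_mem' := by
            rintro a ⟨v, hv, hv'⟩
            exact ⟨v⁻¹, inv_mem hv, by
              rw [QuotientGroup.mk_inv, QuotientGroup.mk_inv, inv_pow, hv']⟩ }
      have hS : (pPow p 1)^[i + 1] M ⊔ A ≤ S := by
        refine sup_le ?_ ?_
        · rw [Function.iterate_succ_apply']
          exact pPow_one_le fun w hw => ⟨w, hw, rfl⟩
        · intro a ha
          refine ⟨1, one_mem _, ?_⟩
          rw [(QuotientGroup.eq_one_iff a).2 (hT ▸ Subgroup.mem_sup_right ha)]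
          simp
      obtain ⟨w, hw, hwg⟩ := hS hxg
      refine ⟨x * w, mul_mem hx (iterate_pPow_le p M i hw), ?_⟩
      rw [← hT, ← QuotientGroup.eq_one_iff, QuotientGroup.mk_mul, QuotientGroup.mk_inv,
        QuotientGroup.mk_pow, hmul x hw, hwg, QuotientGroup.mk_mul, QuotientGroup.mk_inv,
        QuotientGroup.mk_pow]
      group
  obtain ⟨n, hn⟩ := exists_iterate_pPow_eq_bot hH M
  obtain ⟨x, hx, h⟩ := key n
  refine ⟨x, hx, ?_⟩
  have : (pPow p 1)^[n + 1] M = ⊥ := by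
    rw [Function.iterate_succ_apply', hn]
    exact le_bot_iff.1 (pPow_le_self p 1 ⊥)
  rwa [this, bot_sup_eq] at h

theorem exists_pow_of_mem_iterate [Finite H] {p : ℕ} [hp : Fact p.Prime] (hodd : Odd p)
    (hH : IsPGroup p H) {A M : Subgroup H} (hA : A ≤ Subgroup.center H) (hM : PowerfulMod p A M)
    (i : ℕ) : ∀ g ∈ (pPow p 1)^[i] M, ∃ x ∈ M, (x ^ p ^ i)⁻¹ * g ∈ A := by
  induction i with
  | zero => exact fun g hg => ⟨g, hg, by simp⟩
  | succ i ih =>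
    intro g hg
    rw [Function.iterate_succ_apply'] at hg
    obtain ⟨y, hy, hyg⟩ := exists_pow_of_mem_pPow_one hodd hH hA (hM.iterate hodd hH hA i) hg
    obtain ⟨x, hx, hxy⟩ := ih y hy
    refine ⟨x, hx, ?_⟩
    obtain ⟨b, hb, rfl⟩ : ∃ b ∈ A, y = x ^ p ^ i * b := ⟨_, hxy, by simp⟩
    have hc : Commute (x ^ p ^ i) b := Subgroup.mem_center_iff.1 (hA hb) _
    have := mul_mem (pow_mem hb p) hyg
    rw [hc.mul_pow, ← pow_mul, ← pow_succ] at this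
    simpa [mul_assoc] using this

/-- Together with `pPow_le_iterate`: modulo `A`, the subgroups `𝕌₁^i(M)` and `𝕌_i(M)` agree. -/
theorem iterate_pPow_le_sup [Finite H] {p : ℕ} [hp : Fact p.Prime] (hodd : Odd p)
    (hH : IsPGroup p H) {A M : Subgroup H} (hA : A ≤ Subgroup.center H) (hM : PowerfulMod p A M)
    (i : ℕ) : (pPow p 1)^[i] M ≤ pPow p i M ⊔ A := by
  intro g hg
  obtain ⟨x, hx, h⟩ := exists_pow_of_mem_iterate hodd hH hA hM i g hg
  simpa using Subgroup.mul_mem_sup (pow_mem_pPow p i hx) h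

/-- The identity for all `k`, in a single finite `p`-group. The subgroup `⁅M, H⁆` is itself powerful
modulo `⊥`, so that `𝕌₁^k` and `𝕌_k` agree on it. -/
theorem pPow_commutator [Finite H] {p : ℕ} [hp : Fact p.Prime] (hodd : Odd p)
    (hH : IsPGroup p H) {A M : Subgroup H} (hA : A ≤ Subgroup.center H) (hM : PowerfulMod p A M)
    (k : ℕ) : pPow p k ⁅M, (⊤ : Subgroup H)⁆ = ⁅pPow p k M, (⊤ : Subgroup H)⁆ := by
  have := hM.normal
  have hK : PowerfulMod p ⊥ ⁅M, (⊤ : Subgroup H)⁆ :=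
    ⟨inferInstance, by
      rw [pPow_one_commutator hodd hH hA hM, sup_bot_eq]
      exact hM.comm_comm_le hA⟩
  have e1 : pPow p k ⁅M, (⊤ : Subgroup H)⁆ = (pPow p 1)^[k] ⁅M, (⊤ : Subgroup H)⁆ :=
    le_antisymm (pPow_le_iterate _ _ _)
      (by simpa using iterate_pPow_le_sup hodd hH bot_le hK k)
  rw [e1, iterate_pPow_commutator hodd hH hA hM k]
  refine le_antisymm ?_ (Subgroup.commutator_mono (pPow_le_iterate _ _ _) le_rfl)
  exact (Subgroup.commutator_mono (iterate_pPow_le_sup hodd hH hA hM k) le_rfl).trans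
    (commutator_sup_center hA (pPow_normal p k hM.normal))

end Powerful

/-! ### The semidirect product of a relative central extension -/

namespace RelCentralExt

variable {M G : Type*} [Group M] [Group G] {σ : M →* G} {N : Subgroup G}

/-- The action of `G` on `M` as a homomorphism to `MulAut M`. The given action is a right action,
so `g` acts by `m ↦ m^(g⁻¹)`. -/
def toMulAut (E : RelCentralExt σ N) : G →* MulAut M where
  toFun g :=
    { toFun := fun m => E.act m g⁻¹
      invFun := fun m => E.act m g
      left_inv := fun m => by simp [E.act_act, E.act_one]
      right_inv := fun m => by simp [E.act_act, E.act_one]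
      map_mul' := fun m n => E.act_mul m n _ }
  map_one' := by ext m; simp [E.act_one]
  map_mul' g h := by ext m; simp [E.act_act]

theorem toMulAut_apply (E : RelCentralExt σ N) (g : G) (m : M) :
    E.toMulAut g m = E.act m g⁻¹ := rfl

/-- Conjugation by any element of `M ⋊ G` restricts on `M` to the action of an element of `G`. -/
theorem conj_inl (E : RelCentralExt σ N) (h : M ⋊[E.toMulAut] G) (m : M) :
    h * SemidirectProduct.inl m * h⁻¹ =
      SemidirectProduct.inl (E.act m (h.right⁻¹ * σ (h.left⁻¹))) := by
  rw [← E.act_act, E.act_sigma, ← toMulAut_apply, map_mul, map_mul, SemidirectProduct.inl_aut]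
  nth_rw 1 2 [← SemidirectProduct.inl_left_mul_inr_right h]
  simp only [mul_inv_rev, map_inv, inv_inv, mul_assoc]

/-- Inside `M ⋊ G`, the subgroup `[X, G]` is the commutator of `X` with the whole group. -/
theorem map_commSub (E : RelCentralExt σ N) (X : Subgroup M) :
    (E.commSub X).map (SemidirectProduct.inl : M →* M ⋊[E.toMulAut] G) =
      ⁅X.map (SemidirectProduct.inl : M →* M ⋊[E.toMulAut] G), ⊤⁆ := by
  apply le_antisymm
  · unfold commSub
    rw [MonoidHom.map_closure, Subgroup.closure_le]
    rintro _ ⟨_, ⟨m, hm, g, rfl⟩, rfl⟩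
    have : (SemidirectProduct.inl (E.cmt m g) : M ⋊[E.toMulAut] G) =
        ⁅(SemidirectProduct.inl m⁻¹ : M ⋊[E.toMulAut] G), SemidirectProduct.inr g⁻¹⁆ := by
      have h := E.conj_inl (SemidirectProduct.inr g⁻¹) m
      have e : E.act m g = E.act m ((SemidirectProduct.inr g⁻¹ : M ⋊[E.toMulAut] G).right⁻¹ *
          σ ((SemidirectProduct.inr g⁻¹ : M ⋊[E.toMulAut] G).left⁻¹)) := by simp
      rw [cmt, map_mul, e, ← h, commutatorElement_def, map_inv, inv_inv]
      simp only [mul_assoc]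
    rw [this]
    exact Subgroup.commutator_mem_commutator ⟨m⁻¹, inv_mem hm, rfl⟩ trivial
  · rw [Subgroup.commutator_le]
    rintro _ ⟨m, hm, rfl⟩ h -
    refine ⟨E.cmt m⁻¹ (h.right⁻¹ * σ (h.left⁻¹)),
      Subgroup.subset_closure ⟨m⁻¹, inv_mem hm, _, rfl⟩, ?_⟩
    rw [cmt, map_mul, ← E.conj_inl h m⁻¹, inv_inv, commutatorElement_def, map_inv]
    simp only [mul_assoc]

end RelCentralExt

/-- Equation (3.2) from the proof of Theorem 3.11: let `p` be an odd prime, `(G, N)` a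
pair of finite `p`-groups with `N` powerfully embedded in `G` (`[N, G] ≤ 𝕌₁(N)`), and
`σ : N* → G` a covering pair of `(G, N)` (a relative central extension with `N*` a
finite `p`-group and `ker σ ≤ Z(N*, G) ∩ [N*, G]`; the `Z(N*, G)` part is axiom (iv)
of a relative central extension). Then `𝕌ₖ([N*, G]) = [𝕌ₖ(N*), G]` for all `k ≥ 0`. -/
theorem stmt_17 {G : Type*} [Group G] [Finite G] (p : ℕ) (hp : p.Prime) (hodd : Odd p)
    (hG : IsPGroup p G) (N : Subgroup G) (hN : N.Normal)
    (hpe : ⁅N, (⊤ : Subgroup G)⁆ ≤ pPow p 1 N)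
    {Nstar : Type*} [Group Nstar] [Finite Nstar] (σ : Nstar →* G)
    (E : RelCentralExt σ N) (hNstar : IsPGroup p Nstar)
    (hker : σ.ker ≤ E.commSub ⊤) :
    ∀ k : ℕ, pPow p k (E.commSub ⊤) = E.commSub (pPow p k ⊤) := by
  have := Fact.mk hp
  let ι : Nstar →* Nstar ⋊[E.toMulAut] G := SemidirectProduct.inl
  have hι : Function.Injective ι := SemidirectProduct.inl_injective
  have hfin : Finite (Nstar ⋊[E.toMulAut] G) :=
    Finite.of_equiv _ (SemidirectProduct.equivProd (φ := E.toMulAut)).symm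
  have hH : IsPGroup p (Nstar ⋊[E.toMulAut] G) := by
    obtain ⟨a, ha⟩ := IsPGroup.iff_card.1 hNstar
    obtain ⟨b, hb⟩ := IsPGroup.iff_card.1 hG
    exact IsPGroup.of_card (n := a + b) (by rw [SemidirectProduct.card, ha, hb, pow_add])
  have hA : σ.ker.map ι ≤ Subgroup.center (Nstar ⋊[E.toMulAut] G) := by
    rintro _ ⟨a, ha, rfl⟩
    rw [Subgroup.mem_center_iff]
    intro h
    have := E.conj_inl h a
    rw [E.ker_act a ha] at this
    exact mul_inv_eq_iff_eq_mul.1 this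
  have hM : PowerfulMod p (σ.ker.map ι) ((⊤ : Subgroup Nstar).map ι) := by
    refine ⟨⟨?_⟩, ?_⟩
    · rintro _ ⟨m, -, rfl⟩ h
      exact ⟨_, trivial, (E.conj_inl h m).symm⟩
    · rw [← E.map_commSub, ← map_pPow, ← Subgroup.map_sup]
      refine Subgroup.map_mono ((Subgroup.closure_le _).2 ?_)
      rintro _ ⟨m, -, g, rfl⟩
      have h1 : σ (E.cmt m g) ∈ (pPow p 1 (⊤ : Subgroup Nstar)).map σ := by
        rw [map_pPow, ← MonoidHom.range_eq_map, E.range_eq]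
        apply hpe
        have h2 : σ (E.cmt m g) = ⁅(σ m)⁻¹, g⁻¹⁆ := by
          simp [RelCentralExt.cmt, E.sigma_act, commutatorElement_def, mul_assoc]
        rw [h2]
        refine Subgroup.commutator_mem_commutator (inv_mem ?_) trivial
        rw [← E.range_eq]
        exact ⟨m, rfl⟩
      rw [← Subgroup.comap_map_eq]
      exact h1
  intro k
  apply Subgroup.map_injective hι
  rw [map_pPow, E.map_commSub, E.map_commSub, map_pPow]
  exact pPow_commutator hodd hH hA hM k
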